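/- arXiv:2205.08825 — 2 statements merged into one kernel-verified Lean document; each statement's English description precedes it below -/
import Mathlib

section
/- Let p ≥ 2 be an integer, n = p + 2, a > 1, and let c ∈ ℝ with |c| < 1. Then the intersection {x ∈ ℝⁿ : x_{p+2} = c} ∩ S_{p,1} has exactly two connected components. -/
/-- The hypersurface `S_{p,1} ⊂ ℝ^{p+2}` defined by
`(x₁² + ⋯ + x_{p+1}² − a²)² + x_{p+2}² = 1`, which is homeomorphic to `Sᵖ × S¹`. -/
def Sp1 (p : ℕ) (a : ℝ) : Set (Fin (p+2) → ℝ) :=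
  {x | ((∑ i : Fin (p+1), x (Fin.castSucc i) ^ 2) - a^2)^2
        + x (Fin.last (p+1)) ^ 2 = 1}

/-! On the hyperplane `x_{p+2} = c` the equation of `S_{p,1}` says that
`x₁² + ⋯ + x_{p+1}²` is one of the two numbers `a² ± √(1 - c²)`. The slice therefore maps
continuously onto a two-point discrete space, and each fibre is a `p`-sphere (a point when its
radius is `0`), hence connected. A continuous map to a discrete space with connected fibres
induces a bijection from connected components to points. -/

section ConnectedFibres

variable {X Y : Type*} [TopologicalSpace X] [TopologicalSpace Y]

theorem natCard_connectedComponents_of_isConnected_fiber [DiscreteTopology Y] {f : X → Y}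
    (hf : Continuous f) (hconn : ∀ y, IsConnected (f ⁻¹' {y})) :
    Nat.card (ConnectedComponents X) = Nat.card Y :=
  Nat.card_congr <| ConnectedComponents.equivOfIsClopenOfIsConnected
    (fun y ↦ (isClopen_discrete {y}).preimage hf) (pairwise_disjoint_fiber f)
    (by rw [← Set.preimage_iUnion, Set.iUnion_of_singleton, Set.preimage_univ]) hconn

theorem natCard_connectedComponents_inter_preimage {f : X → Y} {s : Set X} {t : Set Y}
    [DiscreteTopology t] (hf : ContinuousOn f s)
    (hconn : ∀ y ∈ t, IsConnected (s ∩ f ⁻¹' {y})) :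
    Nat.card (ConnectedComponents ↥(s ∩ f ⁻¹' t)) = t.ncard := by
  have hmaps : Set.MapsTo f (s ∩ f ⁻¹' t) t := fun _ hx ↦ hx.2
  refine natCard_connectedComponents_of_isConnected_fiber
    ((hf.mono Set.inter_subset_left).mapsToRestrict hmaps) fun y ↦ ?_
  have hfiber : hmaps.restrict ⁻¹' {y} = Subtype.val ⁻¹' (f ⁻¹' {y.1}) :=
    Set.ext fun _ ↦ Subtype.ext_iff
  have himage : Subtype.val '' (hmaps.restrict ⁻¹' {y}) = s ∩ f ⁻¹' {y.1} := by
    rw [hfiber, Subtype.image_preimage_coe, Set.inter_assoc, ← Set.preimage_inter,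
      Set.inter_eq_self_of_subset_right (Set.singleton_subset_iff.2 y.2)]
  have hy := himage ▸ hconn y y.2
  exact ⟨hy.nonempty.of_image, Topology.IsInducing.subtypeVal.isPreconnected_image.1
    hy.isPreconnected⟩

end ConnectedFibres

theorem isConnected_setOf_sum_sq_eq {ι : Type*} [Fintype ι] [Nontrivial ι] {r : ℝ} (hr : 0 ≤ r) :
    IsConnected {v : ι → ℝ | ∑ i, v i ^ 2 = r} := by
  have hrank : 1 < Module.rank ℝ (EuclideanSpace ℝ ι) := by
    rw [← Module.finrank_eq_rank, finrank_euclideanSpace]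
    exact_mod_cast Fintype.one_lt_card
  have himage : WithLp.ofLp '' Metric.sphere (0 : EuclideanSpace ℝ ι) √r =
      {v : ι → ℝ | ∑ i, v i ^ 2 = r} := by
    rw [EuclideanSpace.sphere_zero_eq _ (Real.sqrt_nonneg r), Real.sq_sqrt hr]
    exact (WithLp.equiv 2 (ι → ℝ)).image_eq_preimage_symm _
  rw [← himage]
  exact (isConnected_sphere hrank 0 (Real.sqrt_nonneg r)).image _
    (PiLp.continuous_ofLp 2 _).continuousOn

/-- The squared distance `x₁² + ⋯ + x_m²` of a point of `ℝ^{m+1}` to the last coordinate axis. -/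
def axisDistSq {m : ℕ} (x : Fin (m + 1) → ℝ) : ℝ :=
  ∑ i : Fin m, x i.castSucc ^ 2

theorem continuous_axisDistSq {m : ℕ} : Continuous (axisDistSq (m := m)) := by
  unfold axisDistSq
  fun_prop

theorem isConnected_hyperplane_inter_axisDistSq_fiber {m : ℕ} [Nontrivial (Fin m)] (c : ℝ) {r : ℝ}
    (hr : 0 ≤ r) :
    IsConnected ({x : Fin (m + 1) → ℝ | x (Fin.last m) = c} ∩ axisDistSq ⁻¹' {r}) := by
  have himage : (fun v : Fin m → ℝ ↦ Fin.snoc (α := fun _ ↦ ℝ) v c) '' {v | ∑ i, v i ^ 2 = r} =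
      {x | x (Fin.last m) = c} ∩ axisDistSq ⁻¹' {r} := by
    ext x
    constructor
    · rintro ⟨v, hv, rfl⟩
      simpa [axisDistSq] using hv
    · rintro ⟨rfl, hx⟩
      exact ⟨Fin.init x, hx, Fin.snoc_init_self x⟩
  rw [← himage]
  exact (isConnected_setOf_sum_sq_eq hr).image _
    (Continuous.finSnoc (A := fun _ ↦ ℝ) continuous_id continuous_const).continuousOn

theorem hyperplane_inter_Sp1_eq (p : ℕ) (a : ℝ) {c : ℝ} (hc : |c| ≤ 1) :
    {x : Fin (p + 2) → ℝ | x (Fin.last (p + 1)) = c} ∩ Sp1 p a =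
      {x | x (Fin.last (p + 1)) = c} ∩
        axisDistSq ⁻¹' {a ^ 2 + √(1 - c ^ 2), a ^ 2 - √(1 - c ^ 2)} := by
  have hsqrt : √(1 - c ^ 2) ^ 2 = 1 - c ^ 2 :=
    Real.sq_sqrt (sub_nonneg.2 ((sq_le_one_iff_abs_le_one c).2 hc))
  ext x
  refine and_congr_right fun hx : x (Fin.last (p + 1)) = c ↦ ?_
  calc
    x ∈ Sp1 p a ↔ (axisDistSq x - a ^ 2) ^ 2 + c ^ 2 = 1 := by rw [← hx]; rfl
    _ ↔ (axisDistSq x - a ^ 2) ^ 2 = √(1 - c ^ 2) ^ 2 := by rw [hsqrt, eq_sub_iff_add_eq]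
    _ ↔ axisDistSq x = a ^ 2 + √(1 - c ^ 2) ∨ axisDistSq x = a ^ 2 - √(1 - c ^ 2) := by
      rw [sq_eq_sq_iff_eq_or_eq_neg, sub_eq_iff_eq_add', sub_eq_iff_eq_add', ← sub_eq_add_neg]

theorem stmt17_general {p : ℕ} (hp : 1 ≤ p) {a c : ℝ} (hc : |c| < 1)
    (ha : √(1 - c ^ 2) ≤ a ^ 2) :
    Nat.card (ConnectedComponents
      ↥({x : Fin (p + 2) → ℝ | x (Fin.last (p + 1)) = c} ∩ Sp1 p a)) = 2 := by
  have : Nontrivial (Fin (p + 1)) := Fin.nontrivial_iff_two_le.2 (by lia)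
  have hsqrt : 0 < √(1 - c ^ 2) :=
    Real.sqrt_pos.2 (sub_pos.2 ((sq_lt_one_iff_abs_lt_one c).2 hc))
  rw [hyperplane_inter_Sp1_eq p a hc.le,
    natCard_connectedComponents_inter_preimage continuous_axisDistSq.continuousOn,
    Set.ncard_pair (by linarith)]
  rintro r (rfl | rfl)
  · exact isConnected_hyperplane_inter_axisDistSq_fiber c (by positivity)
  · exact isConnected_hyperplane_inter_axisDistSq_fiber c (sub_nonneg.2 ha)

/-- For `p ≥ 2` and `|c| < 1`, the intersection `{x_{p+2} = c} ∩ S_{p,1}` has exactly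
two connected components. -/
theorem stmt17 (p : ℕ) (hp : 2 ≤ p) (a : ℝ) (ha : 1 < a) (c : ℝ) (hc : |c| < 1) :
    Nat.card (ConnectedComponents
      ↥({x : Fin (p+2) → ℝ | x (Fin.last (p+1)) = c} ∩ Sp1 p a)) = 2 :=
  stmt17_general (one_le_two.trans hp) hc <|
    (Real.sqrt_le_one.2 (sub_le_self 1 (sq_nonneg c))).trans (one_le_pow₀ ha.le)
end

section
/- Let p ≥ 2 be an integer, n = p + 2, a > 1, and let X = Σ_{i=1}^n Rᵢ ∂/∂xᵢ be a polynomial vector field of degree m defined on S_{p,1} with R_{p+2} ≠ 0 (ensuring X has only finitely many invariant parallels). Then the number of distinct real numbers c such that x_{p+2} − c divides R_{p+2} — equivalently, such that the hyperplane {x_{p+2} = c} is invariant for X — is at most m − 1. -/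
/-!
A polynomial vector field tangent to `h = 0` satisfies `X h = 0` at every complex zero of `h`.
Since `|a| > 1`, the polynomial `h` has zeros `(0, …, 0, t)` with `t² = 1 - a⁴ < 0`, at which the
only nonvanishing partial derivative of `h` is the last one; so `R_{p+2}` vanishes there. No
factor `x_{p+2} - c` with `c` real vanishes at such a point, hence the quotient of `R_{p+2}` by
the product of these factors does, and it is therefore not constant.
-/

open MvPolynomial

/-- The polynomial `h = (x₁² + ⋯ + x_{p+1}² − a²)² + x_{p+2}² − 1`
whose zero set is `S_{p,1} ⊂ ℝ^{p+2}`. -/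
noncomputable def hp1 (p : ℕ) (a : ℝ) : MvPolynomial (Fin (p+2)) ℝ :=
  ((∑ i : Fin (p+1), X (Fin.castSucc i) ^ 2) - C (a^2))^2
    + X (Fin.last (p+1)) ^ 2 - 1

section LinearFactors

variable {σ k A : Type*}

theorem totalDegree_X_sub_C [CommRing k] [Nontrivial k] (j : σ) (c : k) :
    (X j - C c : MvPolynomial σ k).totalDegree = 1 := by
  rw [sub_eq_add_neg, ← C_neg, totalDegree_add_eq_left_of_totalDegree_lt] <;>
    simp only [totalDegree_C, totalDegree_X, Nat.lt_one_iff]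

theorem X_sub_C_ne_zero [CommRing k] [Nontrivial k] (j : σ) (c : k) :
    (X j - C c : MvPolynomial σ k) ≠ 0 := by
  intro h
  simpa [h] using totalDegree_X_sub_C j c

theorem prod_X_sub_C_ne_zero [CommRing k] [IsDomain k] (j : σ) (s : Finset k) :
    (∏ c ∈ s, (X j - C c) : MvPolynomial σ k) ≠ 0 :=
  Finset.prod_ne_zero_iff.mpr fun c _ ↦ X_sub_C_ne_zero j c

theorem totalDegree_prod_X_sub_C [CommRing k] [IsDomain k] (j : σ) (s : Finset k) :
    (∏ c ∈ s, (X j - C c) : MvPolynomial σ k).totalDegree = s.card := by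
  classical
  induction s using Finset.induction_on with
  | empty => simp
  | insert c s hc ih =>
    rw [Finset.prod_insert hc, Finset.card_insert_of_notMem hc,
      totalDegree_mul_of_isDomain (X_sub_C_ne_zero j c) (prod_X_sub_C_ne_zero j s),
      totalDegree_X_sub_C, ih, add_comm]

theorem isCoprime_X_sub_C_of_isUnit_sub [CommRing k] (j : σ) {c d : k} (h : IsUnit (c - d)) :
    IsCoprime (X j - C c : MvPolynomial σ k) (X j - C d) := by
  simpa using (Polynomial.isCoprime_X_sub_C_of_isUnit_sub h).map
    (Polynomial.toMvPolynomial j : Polynomial k →ₐ[k] MvPolynomial σ k).toRingHom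

theorem prod_X_sub_C_dvd [Field k] {j : σ} {s : Finset k} {f : MvPolynomial σ k}
    (hs : ∀ c ∈ s, (X j - C c) ∣ f) : (∏ c ∈ s, (X j - C c)) ∣ f :=
  Finset.prod_dvd_of_coprime
    (fun _ _ _ _ hcd ↦ isCoprime_X_sub_C_of_isUnit_sub j (sub_ne_zero.mpr hcd).isUnit) hs

theorem aeval_prod_X_sub_C_ne_zero [CommRing k] [CommRing A] [IsDomain A] [Algebra k A]
    {v : σ → A} {j : σ} (hv : v j ∉ Set.range (algebraMap k A)) (s : Finset k) :
    aeval v (∏ c ∈ s, (X j - C c)) ≠ 0 := by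
  rw [map_prod, Finset.prod_ne_zero_iff]
  intro c _ hc
  rw [map_sub, aeval_X, aeval_C, sub_eq_zero] at hc
  exact hv ⟨c, hc.symm⟩

theorem card_lt_totalDegree_of_X_sub_C_dvd [Field k] [CommRing A] [IsDomain A] [Algebra k A]
    {f : MvPolynomial σ k} (hf : f ≠ 0) {v : σ → A} (hvf : aeval v f = 0) {j : σ}
    (hvj : v j ∉ Set.range (algebraMap k A)) {s : Finset k}
    (hs : ∀ c ∈ s, (X j - C c) ∣ f) : s.card < f.totalDegree := by
  obtain ⟨g, rfl⟩ := prod_X_sub_C_dvd hs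
  have hg : g ≠ 0 := right_ne_zero_of_mul hf
  have hvg : aeval v g = 0 := by
    rw [map_mul] at hvf
    exact (mul_eq_zero.mp hvf).resolve_left (aeval_prod_X_sub_C_ne_zero hvj s)
  have hdeg : g.totalDegree ≠ 0 := by
    intro h
    rw [totalDegree_eq_zero_iff_eq_C] at h
    rw [h, aeval_C, FaithfulSMul.algebraMap_eq_zero_iff] at hvg
    exact hg (by rw [h, hvg, C_0])
  rw [totalDegree_mul_of_isDomain (prod_X_sub_C_ne_zero j s) hg, totalDegree_prod_X_sub_C]
  exact Nat.lt_add_of_pos_right (Nat.pos_of_ne_zero hdeg)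

end LinearFactors

theorem aeval_eq_zero_of_sum_mul_pderiv_eq {σ k A : Type*} [Fintype σ] [CommSemiring k]
    [CommSemiring A] [NoZeroDivisors A] [Algebra k A] {R : σ → MvPolynomial σ k}
    {h K : MvPolynomial σ k} (hinv : ∑ i, R i * pderiv i h = K * h) {v : σ → A}
    (hv : aeval v h = 0) {j : σ} (hne : ∀ i ≠ j, aeval v (pderiv i h) = 0)
    (hj : aeval v (pderiv j h) ≠ 0) : aeval v (R j) = 0 := by
  have hXh : aeval v (R j) * aeval v (pderiv j h) = 0 := calc
    aeval v (R j) * aeval v (pderiv j h) = ∑ i, aeval v (R i) * aeval v (pderiv i h) :=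
      (Fintype.sum_eq_single (f := fun i ↦ aeval v (R i) * aeval v (pderiv i h)) j
        fun i hi ↦ mul_eq_zero_of_right _ (hne i hi)).symm
    _ = aeval v (K * h) := by simp only [← hinv, map_sum, map_mul]
    _ = 0 := by rw [map_mul, hv, mul_zero]
  exact (mul_eq_zero.mp hXh).resolve_right hj

section Hypersurface

variable (p : ℕ) (a : ℝ)

theorem pderiv_castSucc_hp1 (i : Fin (p + 1)) :
    pderiv i.castSucc (hp1 p a) =
      4 * ((∑ l : Fin (p + 1), X l.castSucc ^ 2) - C (a ^ 2)) * X i.castSucc := by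
  have hsum : pderiv i.castSucc (∑ l : Fin (p + 1), X (R := ℝ) l.castSucc ^ 2) =
      2 * X i.castSucc := by
    simp [Derivation.leibniz_pow, pderiv_X, Pi.single_apply]
  have hlast : pderiv i.castSucc (X (R := ℝ) (Fin.last (p + 1))) = 0 :=
    pderiv_X_of_ne (Fin.castSucc_ne_last i).symm
  simp only [hp1, map_sub, map_add, Derivation.leibniz_pow, hsum, hlast, pderiv_C, pderiv_one,
    smul_eq_mul, nsmul_eq_mul]
  ring

theorem pderiv_last_hp1 :
    pderiv (Fin.last (p + 1)) (hp1 p a) = 2 * X (Fin.last (p + 1)) := by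
  simp [hp1, Derivation.leibniz_pow, pderiv_X]

variable {A : Type*} [CommRing A] [Algebra ℝ A]

theorem aeval_single_last_hp1 (t : A) :
    aeval (Pi.single (Fin.last (p + 1)) t) (hp1 p a) = t ^ 2 - algebraMap ℝ A (1 - a ^ 4) := by
  have hsum : ∑ i : Fin (p + 1),
      (Pi.single (Fin.last (p + 1)) t : Fin (p + 2) → A) i.castSucc ^ 2 = 0 := by simp
  simp only [hp1, map_sub, map_add, map_pow, map_sum, map_one, aeval_X, aeval_C, hsum,
    Pi.single_eq_same]
  ring

variable {p a}

theorem aeval_single_last_eq_zero_of_invariant [IsDomain A]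
    {R : Fin (p + 2) → MvPolynomial (Fin (p + 2)) ℝ} {K : MvPolynomial (Fin (p + 2)) ℝ}
    (hinv : ∑ i, R i * pderiv i (hp1 p a) = K * hp1 p a) {t : A} (ht₀ : t ≠ 0)
    (ht : t ^ 2 = algebraMap ℝ A (1 - a ^ 4)) :
    aeval (Pi.single (Fin.last (p + 1)) t) (R (Fin.last (p + 1))) = 0 := by
  have : CharZero A := charZero_of_injective_algebraMap (algebraMap ℝ A).injective
  refine aeval_eq_zero_of_sum_mul_pderiv_eq hinv ?_ (fun i hi ↦ ?_) ?_
  · rw [aeval_single_last_hp1, ht, sub_self]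
  · obtain ⟨i, rfl⟩ := Fin.exists_castSucc_eq.mpr hi
    rw [pderiv_castSucc_hp1, map_mul, aeval_X, Pi.single_eq_of_ne hi, mul_zero]
  · simpa [pderiv_last_hp1] using ht₀

end Hypersurface

theorem notMem_range_algebraMap_of_sq_eq {k A : Type*} [Field k] [LinearOrder k]
    [IsStrictOrderedRing k] [CommRing A] [Nontrivial A] [Algebra k A]
    {t : A} {b : k} (hb : b < 0) (ht : t ^ 2 = algebraMap k A b) :
    t ∉ Set.range (algebraMap k A) := by
  rintro ⟨r, rfl⟩
  rw [← map_pow, (algebraMap k A).injective.eq_iff] at ht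
  exact (hb.trans_le (sq_nonneg r)).ne' ht

theorem stmt18_general (p : ℕ) {a : ℝ} (ha : 1 < |a|)
    (R : Fin (p + 2) → MvPolynomial (Fin (p + 2)) ℝ) (K : MvPolynomial (Fin (p + 2)) ℝ)
    (hinv : ∑ i, R i * pderiv i (hp1 p a) = K * hp1 p a)
    (hRne : R (Fin.last (p + 1)) ≠ 0) (s : Finset ℝ)
    (hs : ∀ c ∈ s, (X (Fin.last (p + 1)) - C c) ∣ R (Fin.last (p + 1))) :
    s.card < (R (Fin.last (p + 1))).totalDegree := by
  have ha₄ : 1 - a ^ 4 < 0 := by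
    rw [sub_neg, ← Even.pow_abs (by decide : Even 4)]
    exact one_lt_pow₀ ha (by decide)
  obtain ⟨t, ht⟩ := IsAlgClosed.exists_pow_nat_eq (algebraMap ℝ ℂ (1 - a ^ 4)) two_pos
  have ht_range : t ∉ Set.range (algebraMap ℝ ℂ) := notMem_range_algebraMap_of_sq_eq ha₄ ht
  have ht₀ : t ≠ 0 := fun h ↦ ht_range ⟨0, by rw [h, map_zero]⟩
  refine card_lt_totalDegree_of_X_sub_C_dvd hRne
    (aeval_single_last_eq_zero_of_invariant hinv ht₀ ht) ?_ hs
  rwa [Pi.single_eq_same]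

/-- For `p ≥ 2` and a polynomial vector field `X = Σ Rᵢ ∂/∂xᵢ` of degree `m` defined on
`S_{p,1}` with `R_{p+2} ≠ 0`, the number of distinct real `c` such that
`x_{p+2} − c` divides `R_{p+2}` — equivalently such that the hyperplane `{x_{p+2} = c}`
is invariant for `X` — is at most `m − 1`. -/
theorem stmt18 (p : ℕ) (hp : 2 ≤ p) (a : ℝ) (ha : 1 < a) (m : ℕ)
    (R : Fin (p+2) → MvPolynomial (Fin (p+2)) ℝ)
    (hdeg : ∀ i, (R i).totalDegree ≤ m) (hdeg' : ∃ i, (R i).totalDegree = m)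
    (K : MvPolynomial (Fin (p+2)) ℝ)
    (hinv : (∑ i, R i * pderiv i (hp1 p a)) = K * hp1 p a)
    (hRne : R (Fin.last (p+1)) ≠ 0)
    (s : Finset ℝ)
    (hs : ∀ c ∈ s, (X (Fin.last (p+1)) - C c) ∣ R (Fin.last (p+1))) :
    s.card ≤ m - 1 :=
  Nat.le_sub_one_of_lt <| (stmt18_general p (lt_abs.mpr (.inl ha)) R K hinv hRne s hs).trans_le
    (hdeg (Fin.last (p + 1)))
end
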